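/- Let X be a Banach space over the real or complex field F and let B(X) be the algebra of all bounded linear operators on X. Then for every F-bilinear map q : B(X) × B(X) → B(X), every commuting trace T_q : B(X) → B(X) of q is proper. -/

import Mathlib

/-!
Write `⁅a, b⁆ = a * b - b * a` and let `P x y = q x y + q y x` be the polarization of the trace of
`q`. Polarizing `⁅q x x, x⁆ = 0` gives `⁅q x x, y⁆ + ⁅P x y, x⁆ = 0` and the cyclic identity
`⁅P x y, z⁆ + ⁅P y z, x⁆ + ⁅P z x, y⁆ = 0`.

For `x = v ⊗ f` of rank one, the first identity says that `⁅q x x, y⁆ ∈ ⁅x, B(X)⁆` for every `y` of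
rank one, which forces `q x x = l(x) x` modulo scalars; comparing coefficients in `v` and `f`
separately, `l` extends to a linear functional on the finite-rank operators. Subtracting `l(x) y`
from `q`, one may assume that the trace is scalar on rank-one operators. Up to scalars, `P` is then
determined on such operators by a single constant `κ`: for a dual pair `v, w`, `f, g` the operator
`P (v ⊗ f) (w ⊗ g)` commutes with enough rank-one operators to be a multiple of the projection
`v ⊗ f + w ⊗ g`, hence of the polarization of `x ↦ x² - tr(x) x`, and the multiple does not depend
on the pair.

Replacing `q x y` by `q x y - κ x y`, one has `P x y = l'(x) y + l'(y) x` modulo scalars for `x`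
and `y` of finite rank. The cyclic identity extends this to `P x y = m(x) y + l'(y) x` for `x`
arbitrary and `y` of finite rank, and then `⁅q x x, y⁆ + ⁅P x y, x⁆ = 0` shows that
`q x x - m(x) x` commutes with all operators of rank one, so it is a scalar.
-/

open scoped TensorProduct

namespace CommutingTrace

section LinearAlgebra

variable {K E V W Y : Type*} [Field K] [AddCommGroup E] [Module K E] [AddCommGroup V] [Module K V]
  [AddCommGroup W] [Module K W] [AddCommGroup Y] [Module K Y]

lemma exists_eq_smul_of_forall_apply_eq_smul (S T : E →ₗ[K] Y)
    (h : ∀ v, ∃ c : K, S v = c • T v) : ∃ c : K, S = c • T := by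
  by_cases hT : T = 0
  · refine ⟨0, LinearMap.ext fun v ↦ ?_⟩
    obtain ⟨c, hc⟩ := h v
    simp [hc, hT]
  obtain ⟨v₀, hv₀⟩ : ∃ v, T v ≠ 0 := by
    by_contra! hzero
    exact hT (LinearMap.ext hzero)
  obtain ⟨c, hc⟩ := h v₀
  refine ⟨c, LinearMap.ext fun w ↦ ?_⟩
  rw [LinearMap.smul_apply]
  obtain ⟨d, hd⟩ := h w
  obtain ⟨e, he⟩ := h (v₀ + w)
  have hdep : (c - e) • T v₀ = (e - d) • T w := by
    rw [map_add, map_add, hc, hd] at he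
    linear_combination (norm := module) he
  rcases eq_or_ne e d with rfl | hed
  · have hce : c = e := by simpa [hv₀, sub_eq_zero] using hdep
    rw [hd, hce]
  -- Here `T w` is a multiple `a • T v₀`, so `w - a • v₀` lies in `ker T`, hence in `ker S`.
  · have hTw : T w = ((e - d)⁻¹ * (c - e)) • T v₀ := by
      rw [mul_smul, hdep, inv_smul_smul₀ (sub_ne_zero.mpr hed)]
    obtain ⟨k, hk⟩ := h (w - ((e - d)⁻¹ * (c - e)) • v₀)
    rw [map_sub, map_sub, map_smul, map_smul, ← hTw, sub_self, smul_zero, hc, smul_comm, ← hTw]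
      at hk
    exact sub_eq_zero.mp hk

lemma exists_eq_smul_of_forall_tmul_eq_smul (S T : V ⊗[K] W →ₗ[K] Y)
    (h : ∀ v w, ∃ c : K, S (v ⊗ₜ w) = c • T (v ⊗ₜ w)) : ∃ c : K, S = c • T := by
  obtain ⟨c, hc⟩ := exists_eq_smul_of_forall_apply_eq_smul
    (TensorProduct.curry S) (TensorProduct.curry T)
    fun v ↦ exists_eq_smul_of_forall_apply_eq_smul _ _ (h v)
  exact ⟨c, TensorProduct.ext hc⟩

lemma exists_eq_smul_of_forall_tmul_tmul_eq_smul (S T : V ⊗[K] W →ₗ[K] V ⊗[K] W →ₗ[K] Y)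
    (h : ∀ v v', ∃ c : K, ∀ w w', S (v ⊗ₜ w) (v' ⊗ₜ w') = c • T (v ⊗ₜ w) (v' ⊗ₜ w')) :
    ∃ c : K, S = c • T := by
  let regroup (B : V ⊗[K] W →ₗ[K] V ⊗[K] W →ₗ[K] Y) : V →ₗ[K] V →ₗ[K] W →ₗ[K] W →ₗ[K] Y :=
    LinearMap.mk₂ K
      (fun v v' ↦ B.compl₁₂ (TensorProduct.mk K V W v) (TensorProduct.mk K V W v'))
      (fun _ _ _ ↦ by ext; simp) (fun _ _ _ ↦ by ext; simp)
      (fun _ _ _ ↦ by ext; simp) (fun _ _ _ ↦ by ext; simp)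
  obtain ⟨c, hc⟩ := exists_eq_smul_of_forall_apply_eq_smul
      (Y := V →ₗ[K] W →ₗ[K] W →ₗ[K] Y) (regroup S) (regroup T) fun v ↦ by
    refine exists_eq_smul_of_forall_apply_eq_smul (regroup S v) (regroup T v) fun v' ↦ ?_
    obtain ⟨c, hc⟩ := h v v'
    exact ⟨c, LinearMap.ext fun w ↦ LinearMap.ext fun w' ↦ hc w w'⟩
  refine ⟨c, TensorProduct.ext' fun v w ↦ TensorProduct.ext' fun v' w' ↦ ?_⟩
  exact congr($hc v v' w w')

lemma exists_dual_forall_eq_smul (S : E →ₗ[K] Y) (y : Y) (h : ∀ x, ∃ c : K, S x = c • y) :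
    ∃ l : Module.Dual K E, ∀ x, S x = l x • y := by
  rcases eq_or_ne y 0 with rfl | hy
  · exact ⟨0, fun x ↦ by simpa using h x⟩
  obtain ⟨θ, hθ⟩ := Module.Projective.exists_dual_eq_one K hy
  refine ⟨θ ∘ₗ S, fun x ↦ ?_⟩
  obtain ⟨c, hc⟩ := h x
  simp [hc, hθ]

lemma eq_and_eq_of_smul_add_smul_eq {v w : E} (hvw : LinearIndependent K ![v, w]) {a b c d : K}
    (h : a • v + b • w = c • v + d • w) : a = c ∧ b = d := by
  have := LinearIndependent.pair_iff.mp hvw (a - c) (b - d)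
    (by linear_combination (norm := module) h)
  exact this.imp sub_eq_zero.mp sub_eq_zero.mp

/-- The polarization `(x, y) ↦ B x y + B y x` of the trace `x ↦ B x x` of a bilinear map. -/
def polarization (B : E →ₗ[K] E →ₗ[K] Y) : E →ₗ[K] E →ₗ[K] Y := B + B.flip

lemma polarization_apply (B : E →ₗ[K] E →ₗ[K] Y) (x y : E) :
    polarization B x y = B x y + B y x := rfl

lemma polarization_comm (B : E →ₗ[K] E →ₗ[K] Y) (x y : E) :
    polarization B x y = polarization B y x :=
  add_comm _ _

lemma polarization_mem_of_diag_mem {B : E →ₗ[K] E →ₗ[K] Y} {C : Submodule K Y} {x y : E}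
    (hxy : B (x + y) (x + y) ∈ C) (hx : B x x ∈ C) (hy : B y y ∈ C) :
    polarization B x y ∈ C := by
  have hpolar : polarization B x y = B (x + y) (x + y) - B x x - B y y := by
    simp only [polarization_apply, LinearMap.add_apply, map_add]
    abel
  exact hpolar ▸ C.sub_mem (C.sub_mem hxy hx) hy

variable [NeZero (2 : K)]

lemma exists_dual_forall_diag_eq_smul (B : E →ₗ[K] E →ₗ[K] Y) (i : E →ₗ[K] Y)
    (hi : Function.Injective i) (h : ∀ v, ∃ c : K, B v v = c • i v) :
    ∃ l : Module.Dual K E, ∀ v, B v v = l v • i v := by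
  have h₀ : ∀ v, ∃ c : K, (v = 0 → c = 0) ∧ B v v = c • i v := fun v ↦ by
    rcases eq_or_ne v 0 with rfl | hv
    · exact ⟨0, fun _ ↦ rfl, by simp⟩
    · exact (h v).imp fun c hc ↦ ⟨fun hv₀ ↦ absurd hv₀ hv, hc⟩
  choose c hc₀ hc using h₀
  have hsmul (t : K) (v : E) : c (t • v) = t * c v := by
    rcases eq_or_ne (t • v) 0 with htv | htv
    · rcases smul_eq_zero.mp htv with rfl | hv
      · rw [hc₀ _ htv, zero_mul]
      · rw [hc₀ _ htv, hc₀ _ hv, mul_zero]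
    · refine smul_left_injective K ((map_ne_zero_iff i hi).mpr htv) ?_
      calc c (t • v) • i (t • v) = t • t • B v v := by rw [← hc]; simp
        _ = (t * c v) • i (t • v) := by rw [hc, map_smul]; module
  refine ⟨{ toFun := c, map_add' := fun v w ↦ ?_, map_smul' := hsmul }, hc⟩
  by_cases hvw : LinearIndependent K ![v, w]
  · -- Compare the coefficients of `v` and `w` in the parallelogram law for `B`.
    have hpar : i ((c (v + w) + c (v - w)) • v + (c (v + w) - c (v - w)) • w)
        = i ((2 * c v) • v + (2 * c w) • w) := by
      have hadd := hc (v + w)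
      have hsub := hc (v - w)
      simp only [map_add, map_sub, LinearMap.add_apply, LinearMap.sub_apply, map_smul, hc]
        at hadd hsub ⊢
      linear_combination (norm := module) -hadd - hsub
    obtain ⟨hv, hw⟩ := eq_and_eq_of_smul_add_smul_eq hvw (hi hpar)
    refine mul_left_cancel₀ (two_ne_zero (α := K)) ?_
    linear_combination hv + hw
  · rcases eq_or_ne v 0 with rfl | hv
    · simp [hc₀ 0 rfl]
    · obtain ⟨t, rfl⟩ : ∃ t : K, t • v = w := by
        simpa [LinearIndependent.pair_iff' hv] using hvw
      rw [show v + t • v = (1 + t) • v by module, hsmul, hsmul]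
      ring

lemma exists_dual_forall_diag_tmul_eq_smul (B : V ⊗[K] W →ₗ[K] V ⊗[K] W →ₗ[K] Y)
    (i : V ⊗[K] W →ₗ[K] Y) (hi : ∀ v w, i (v ⊗ₜ w) = 0 → v = 0 ∨ w = 0)
    (h : ∀ v w, ∃ c : K, B (v ⊗ₜ w) (v ⊗ₜ w) = c • i (v ⊗ₜ w)) :
    ∃ l : Module.Dual K (V ⊗[K] W), ∀ v w,
      B (v ⊗ₜ w) (v ⊗ₜ w) = l (v ⊗ₜ w) • i (v ⊗ₜ w) := by
  have hleft : ∀ w, ∃ a : Module.Dual K V, (w = 0 → a = 0) ∧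
      ∀ v, B (v ⊗ₜ w) (v ⊗ₜ w) = a v • i (v ⊗ₜ w) := fun w ↦ by
    rcases eq_or_ne w 0 with rfl | hw
    · exact ⟨0, fun _ ↦ rfl, by simp⟩
    let ι := (TensorProduct.mk K V W).flip w
    obtain ⟨a, ha⟩ := exists_dual_forall_diag_eq_smul (B.compl₁₂ ι ι) (i ∘ₗ ι)
      ((injective_iff_map_eq_zero _).mpr fun v hv ↦ (hi v w hv).resolve_right hw)
      fun v ↦ h v w
    exact ⟨a, fun hw₀ ↦ absurd hw₀ hw, ha⟩
  have hright : ∀ v, ∃ b : Module.Dual K W, (v = 0 → b = 0) ∧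
      ∀ w, B (v ⊗ₜ w) (v ⊗ₜ w) = b w • i (v ⊗ₜ w) := fun v ↦ by
    rcases eq_or_ne v 0 with rfl | hv
    · exact ⟨0, fun _ ↦ rfl, by simp⟩
    let ι := TensorProduct.mk K V W v
    obtain ⟨b, hb⟩ := exists_dual_forall_diag_eq_smul (B.compl₁₂ ι ι) (i ∘ₗ ι)
      ((injective_iff_map_eq_zero _).mpr fun w hw ↦ (hi v w hw).resolve_left hv)
      fun w ↦ h v w
    exact ⟨b, fun hv₀ ↦ absurd hv₀ hv, hb⟩
  choose a ha₀ ha using hleft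
  choose b hb₀ hb using hright
  have hab (v : V) (w : W) : a w v = b v w := by
    rcases eq_or_ne v 0 with rfl | hv
    · simp [hb₀]
    rcases eq_or_ne w 0 with rfl | hw
    · simp [ha₀]
    exact smul_left_injective K (fun hzero ↦ (hi v w hzero).elim hv hw)
      ((ha w v).symm.trans (hb v w))
  exact ⟨TensorProduct.lift (LinearMap.mk₂ K (fun v w ↦ a w v)
    (fun _ _ _ ↦ map_add _ _ _) (fun _ _ _ ↦ map_smul _ _ _)
    (fun _ _ _ ↦ by simp only [hab, map_add]) (fun _ _ _ ↦ by simp only [hab, map_smul])),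
    fun v w ↦ ha w v⟩

lemma exists_bilinear_mem_of_diag_mem (p : E →ₗ[K] E →ₗ[K] Y) (C : Submodule K Y)
    (h : ∀ x, p x x ∈ C) :
    ∃ p' : E →ₗ[K] E →ₗ[K] Y, (∀ x y, p' x y ∈ C) ∧ ∀ x, p' x x = p x x := by
  refine ⟨(2 : K)⁻¹ • polarization p, fun x y ↦ ?_, fun x ↦ ?_⟩
  · exact C.smul_mem _ (polarization_mem_of_diag_mem (h _) (h _) (h _))
  · rw [LinearMap.smul_apply, LinearMap.smul_apply, polarization_apply, ← two_smul K,
      inv_smul_smul₀ two_ne_zero]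

end LinearAlgebra

section Algebra

attribute [local instance] LieRing.ofAssociativeRing

variable {K E A : Type*} [Field K] [AddCommGroup E] [Module K E] [Ring A] [Algebra K A]

/-- The center of an algebra as a linear subspace, modulo which all operators are compared. -/
abbrev centerSubmodule (K A : Type*) [Field K] [Ring A] [Algebra K A] : Submodule K A :=
  Subalgebra.toSubmodule (Subalgebra.center K A)

lemma mem_centerSubmodule_iff_lie {a : A} : a ∈ centerSubmodule K A ↔ ∀ b : A, ⁅a, b⁆ = 0 := by
  simp only [Subalgebra.mem_toSubmodule, Subalgebra.mem_center_iff, Ring.lie_def, sub_eq_zero,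
    eq_comm]

lemma lie_eq_lie_of_sub_mem_center {a a' : A} (h : a - a' ∈ centerSubmodule K A) (b : A) :
    ⁅a, b⁆ = ⁅a', b⁆ := by
  rw [← sub_eq_zero, ← sub_lie, mem_centerSubmodule_iff_lie.mp h]

variable [NeZero (2 : K)] {B : E →ₗ[K] E →ₗ[K] A} {i : E →ₗ[K] A}

lemma lie_diag_add_lie_polarization (hB : ∀ x, ⁅B x x, i x⁆ = 0) (x y : E) :
    ⁅B x x, i y⁆ + ⁅polarization B x y, i x⁆ = 0 := by
  have hadd := hB (x + y)
  have hsub := hB (x - y)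
  simp only [map_add, map_sub, LinearMap.add_apply, LinearMap.sub_apply, polarization_apply,
    add_lie, sub_lie, lie_add, lie_sub, hB] at hadd hsub ⊢
  refine (smul_eq_zero_iff_right (two_ne_zero (α := K))).mp ?_
  linear_combination (norm := module) hadd - hsub

lemma lie_polarization_cyclic (hB : ∀ x, ⁅B x x, i x⁆ = 0) (x y z : E) :
    ⁅polarization B x y, i z⁆ + ⁅polarization B y z, i x⁆ + ⁅polarization B z x, i y⁆ = 0 := by
  have hxz := lie_diag_add_lie_polarization hB (x + z) y
  have hx := lie_diag_add_lie_polarization hB x y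
  have hz := lie_diag_add_lie_polarization hB z y
  simp only [map_add, LinearMap.add_apply, polarization_apply, add_lie, lie_add] at hxz hx hz ⊢
  linear_combination (norm := module) hxz - hx - hz

lemma lie_apply {R M : Type*} [Ring R] [AddCommGroup M] [TopologicalSpace M]
    [IsTopologicalAddGroup M] [Module R M] (a b : M →L[R] M) (u : M) :
    ⁅a, b⁆ u = a (b u) - b (a u) := rfl

end Algebra

section Functionals

variable {F X : Type*} [Field F] [TopologicalSpace F] [AddCommGroup X] [TopologicalSpace X]
  [Module F X]

/-- `f` and `g` restrict to the coordinate functionals on the plane spanned by `v` and `w`. -/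
structure IsDualPair (v w : X) (f g : StrongDual F X) : Prop where
  left_left : f v = 1
  left_right : f w = 0
  right_left : g v = 0
  right_right : g w = 1

lemma IsDualPair.swap {v w : X} {f g : StrongDual F X} (h : IsDualPair v w f g) :
    IsDualPair w v g f :=
  ⟨h.right_right, h.right_left, h.left_right, h.left_left⟩

lemma exists_forall_apply_sub_smul_eq_zero (f : StrongDual F X) :
    ∃ u, ∀ x, f (x - f x • u) = 0 := by
  rcases eq_or_ne f 0 with rfl | hf
  · exact ⟨0, by simp⟩
  · obtain ⟨u, hu⟩ := DFunLike.ne_iff.mp hf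
    have hu' : f u ≠ 0 := hu
    exact ⟨(f u)⁻¹ • u, fun x ↦ by simp [hu']⟩

variable [IsTopologicalRing F]

/-- The trace of a finite-rank operator, `v ⊗ f ↦ f v`. -/
def trace : X ⊗[F] StrongDual F X →ₗ[F] F :=
  TensorProduct.lift (ContinuousLinearMap.coeLM F).flip

@[simp]
lemma trace_tmul (v : X) (f : StrongDual F X) : trace (v ⊗ₜ[F] f) = f v := rfl

variable [SeparatingDual F X]

lemma exists_dual_eq_zero_eq_one {v y : X} (h : y ∉ Submodule.span F {v}) :
    ∃ g : StrongDual F X, g v = 0 ∧ g y = 1 := by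
  rcases eq_or_ne v 0 with rfl | hv
  · obtain ⟨g, hg⟩ := SeparatingDual.exists_eq_one (R := F) fun hy : y = 0 ↦ h (by simp [hy])
    exact ⟨g, map_zero g, hg⟩
  · obtain ⟨f, hf⟩ := SeparatingDual.exists_eq_one (R := F) hv
    have hy : y - f y • v ≠ 0 := fun hzero ↦
      h (Submodule.mem_span_singleton.mpr ⟨f y, (sub_eq_zero.mp hzero).symm⟩)
    obtain ⟨k, hk⟩ := SeparatingDual.exists_eq_one (R := F) hy
    refine ⟨k - k v • f, by simp [hf], ?_⟩
    simpa [mul_comm] using hk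

lemma exists_isDualPair {v w : X} (h : LinearIndependent F ![v, w]) :
    ∃ f g : StrongDual F X, IsDualPair v w f g := by
  obtain ⟨g, hgv, hgw⟩ := exists_dual_eq_zero_eq_one (F := F) (v := v) (y := w) fun hw ↦ by
    obtain ⟨t, rfl⟩ := Submodule.mem_span_singleton.mp hw
    exact one_ne_zero (LinearIndependent.pair_iff.mp h t (-1) (by module) |>.2 |> neg_eq_zero.mp)
  obtain ⟨f, hfw, hfv⟩ := exists_dual_eq_zero_eq_one (F := F) (v := w) (y := v) fun hv ↦ by
    obtain ⟨t, rfl⟩ := Submodule.mem_span_singleton.mp hv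
    exact one_ne_zero (LinearIndependent.pair_iff.mp h (-1) t (by module) |>.1 |> neg_eq_zero.mp)
  exact ⟨f, g, hfv, hfw, hgv, hgw⟩

end Functionals

section Operators

attribute [local instance] LieRing.ofAssociativeRing

variable {F X : Type*} [Field F] [TopologicalSpace F] [AddCommGroup X] [TopologicalSpace X]
  [IsTopologicalAddGroup X] [Module F X] [ContinuousSMul F X]

lemma mem_center_of_forall_mem_span_singleton {v : X} (h : ∀ x, x ∈ Submodule.span F {v})
    (a : X →L[F] X) :
    a ∈ centerSubmodule F (X →L[F] X) := by
  refine mem_centerSubmodule_iff_lie.mpr fun b ↦ ContinuousLinearMap.ext fun x ↦ ?_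
  obtain ⟨s, hs⟩ := Submodule.mem_span_singleton.mp (h (a v))
  obtain ⟨t, ht⟩ := Submodule.mem_span_singleton.mp (h (b v))
  obtain ⟨r, rfl⟩ := Submodule.mem_span_singleton.mp (h x)
  simp [lie_apply, ← hs, ← ht, smul_comm s t]

lemma exists_notMem_span_singleton (hX : centerSubmodule F (X →L[F] X) ≠ ⊤) (v : X) :
    ∃ y, y ∉ Submodule.span F {v} := by
  by_contra! h
  exact hX (Submodule.eq_top_iff'.mpr (mem_center_of_forall_mem_span_singleton h))

lemma exists_ne_zero_apply_eq_zero (hX : centerSubmodule F (X →L[F] X) ≠ ⊤)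
    (f : StrongDual F X) : ∃ u ≠ 0, f u = 0 := by
  obtain ⟨e, he⟩ := exists_forall_apply_sub_smul_eq_zero f
  obtain ⟨y, hy⟩ := exists_notMem_span_singleton hX e
  refine ⟨y - f y • e, fun hzero ↦ hy ?_, he y⟩
  exact Submodule.mem_span_singleton.mpr ⟨f y, (sub_eq_zero.mp hzero).symm⟩

variable [IsTopologicalRing F]

/-- The inclusion of the finite-rank operators: `v ⊗ f` becomes the operator `u ↦ f u • v`. -/
def rankOne : X ⊗[F] StrongDual F X →ₗ[F] X →L[F] X :=
  TensorProduct.lift (LinearMap.mk₂ F (fun v f ↦ f.smulRight v)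
    (fun _ _ _ ↦ by ext; simp) (fun _ _ _ ↦ ContinuousLinearMap.ext fun _ ↦ smul_comm _ _ _)
    (fun _ _ _ ↦ by ext; simp [add_smul]) (fun _ _ _ ↦ by ext; simp [mul_smul]))

@[simp]
lemma rankOne_tmul_apply (v u : X) (f : StrongDual F X) :
    rankOne (v ⊗ₜ[F] f) u = f u • v := rfl

lemma rankOne_tmul_mul_rankOne_tmul (v w : X) (f g : StrongDual F X) :
    rankOne (v ⊗ₜ[F] f) * rankOne (w ⊗ₜ[F] g) = f w • rankOne (v ⊗ₜ[F] g) := by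
  ext u
  simp [smul_comm (g u)]

/-- A bilinear map on the finite-rank operators whose trace is commuting, and central on rank-one
operators: the normal form reached by subtracting a suitable `l(x) y`. -/
structure IsReduced (B : X ⊗[F] StrongDual F X →ₗ[F] X ⊗[F] StrongDual F X →ₗ[F] X →L[F] X) :
    Prop where
  lie_diag : ∀ a, ⁅B a a, rankOne a⁆ = 0
  diag_mem_center : ∀ (v : X) (f : StrongDual F X),
    B (v ⊗ₜ f) (v ⊗ₜ f) ∈ centerSubmodule F (X →L[F] X)

/-- The bilinear map whose trace `a ↦ a² - tr(a) a` vanishes on rank-one operators. Its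
polarization spans those of the reduced bilinear maps, modulo the center. -/
def jordanDefect : X ⊗[F] StrongDual F X →ₗ[F] X ⊗[F] StrongDual F X →ₗ[F] X →L[F] X :=
  (LinearMap.mul F (X →L[F] X)).compl₁₂ rankOne rankOne - trace.smulRight rankOne

lemma jordanDefect_apply (a b : X ⊗[F] StrongDual F X) :
    jordanDefect a b = rankOne a * rankOne b - trace a • rankOne b := rfl

lemma isReduced_jordanDefect : IsReduced (jordanDefect (F := F) (X := X)) where
  lie_diag a := by
    simp [jordanDefect_apply, Ring.lie_def, sub_mul, mul_sub, mul_assoc]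
  diag_mem_center v f := by
    simp [jordanDefect_apply, rankOne_tmul_mul_rankOne_tmul]

lemma IsDualPair.polarization_jordanDefect {v w : X} {f g : StrongDual F X}
    (h : IsDualPair v w f g) :
    polarization jordanDefect (v ⊗ₜ f) (w ⊗ₜ g) =
      -(rankOne (v ⊗ₜ[F] f) + rankOne (w ⊗ₜ[F] g)) := by
  simp only [polarization_apply, jordanDefect_apply, rankOne_tmul_mul_rankOne_tmul, trace_tmul,
    h.left_left, h.left_right, h.right_left, h.right_right]
  module

namespace IsReduced

variable {B B' : X ⊗[F] StrongDual F X →ₗ[F] X ⊗[F] StrongDual F X →ₗ[F] X →L[F] X}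

lemma sub_smul (hB : IsReduced B) (hB' : IsReduced B') (c : F) : IsReduced (B - c • B') where
  lie_diag a := by
    simp [sub_lie, smul_lie, hB.lie_diag, hB'.lie_diag]
  diag_mem_center v f :=
    Submodule.sub_mem _ (hB.diag_mem_center v f) (Submodule.smul_mem _ c (hB'.diag_mem_center v f))

lemma polarization_mem_center_of_left_eq (hB : IsReduced B) (v : X) (f g : StrongDual F X) :
    polarization B (v ⊗ₜ f) (v ⊗ₜ g) ∈ centerSubmodule F (X →L[F] X) :=
  polarization_mem_of_diag_mem (TensorProduct.tmul_add (R := F) v f g ▸ hB.diag_mem_center _ _)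
    (hB.diag_mem_center v f) (hB.diag_mem_center v g)

lemma polarization_mem_center_of_right_eq (hB : IsReduced B) (v w : X) (f : StrongDual F X) :
    polarization B (v ⊗ₜ f) (w ⊗ₜ f) ∈ centerSubmodule F (X →L[F] X) :=
  polarization_mem_of_diag_mem (TensorProduct.add_tmul (R := F) v w f ▸ hB.diag_mem_center _ _)
    (hB.diag_mem_center v f) (hB.diag_mem_center w f)

variable [NeZero (2 : F)]

lemma lie_polarization_left (hB : IsReduced B) (v : X) (f : StrongDual F X)
    (b : X ⊗[F] StrongDual F X) :
    ⁅polarization B (v ⊗ₜ f) b, rankOne (v ⊗ₜ[F] f)⁆ = 0 := by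
  have := lie_diag_add_lie_polarization hB.lie_diag (v ⊗ₜ f) b
  rwa [mem_centerSubmodule_iff_lie.mp (hB.diag_mem_center v f), zero_add] at this

lemma lie_polarization_right (hB : IsReduced B) (w : X) (g : StrongDual F X)
    (a : X ⊗[F] StrongDual F X) :
    ⁅polarization B a (w ⊗ₜ g), rankOne (w ⊗ₜ[F] g)⁆ = 0 := by
  rw [polarization_comm, hB.lie_polarization_left]

lemma lie_polarization_left_right (hB : IsReduced B) (v w : X) (f g : StrongDual F X) :
    ⁅polarization B (v ⊗ₜ f) (w ⊗ₜ g), rankOne (v ⊗ₜ[F] g)⁆ = 0 := by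
  have := lie_polarization_cyclic hB.lie_diag (v ⊗ₜ f) (w ⊗ₜ g) (v ⊗ₜ g)
  rwa [mem_centerSubmodule_iff_lie.mp (hB.polarization_mem_center_of_right_eq w v g),
    mem_centerSubmodule_iff_lie.mp (hB.polarization_mem_center_of_left_eq v g f), add_zero,
    add_zero] at this

end IsReduced

variable {v w : X} {f g : StrongDual F X} {a : X →L[F] X}

lemma IsDualPair.exists_apply_eq_smul_of_lie_eq_zero (hd : IsDualPair v w f g)
    (hvf : ⁅a, rankOne (v ⊗ₜ[F] f)⁆ = 0) (hvg : ⁅a, rankOne (v ⊗ₜ[F] g)⁆ = 0)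
    (hwg : ⁅a, rankOne (w ⊗ₜ[F] g)⁆ = 0) :
    ∃ c : F, a v = c • v ∧ a w = c • w ∧ (∀ x, f (a x) = c * f x) ∧ ∀ x, g (a x) = c * g x := by
  obtain ⟨hfv, -, -, hgw⟩ := hd
  have hlie {s : X} {k : StrongDual F X} (hsk : ⁅a, rankOne (s ⊗ₜ[F] k)⁆ = 0) (x : X) :
      k x • a s = k (a x) • s := by
    simpa [lie_apply, sub_eq_zero] using congr($hsk x)
  have hav : a v = g (a w) • v := by simpa [hgw] using hlie hvg w
  have haw : a w = g (a w) • w := by simpa [hgw] using hlie hwg w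
  refine ⟨g (a w), hav, haw, fun x ↦ ?_, fun x ↦ ?_⟩
  · have := congr(f $(hlie hvf x))
    rw [hav] at this
    simpa [hfv, mul_comm] using this.symm
  · simpa [hgw, mul_comm] using congr(g $(hlie hwg x)).symm

variable [SeparatingDual F X]

lemma mem_center_of_forall_lie_rankOne_eq_zero
    (h : ∀ (v : X) (f : StrongDual F X), ⁅a, rankOne (v ⊗ₜ[F] f)⁆ = 0) :
    a ∈ centerSubmodule F (X →L[F] X) := by
  obtain ⟨c, hc⟩ := exists_eq_smul_of_forall_apply_eq_smul (a : X →ₗ[F] X) .id fun v ↦ by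
    rcases eq_or_ne v 0 with rfl | hv
    · exact ⟨0, by simp⟩
    obtain ⟨f, hf⟩ := SeparatingDual.exists_eq_one (R := F) hv
    refine ⟨f (a v), sub_eq_zero.mp ?_⟩
    simpa [lie_apply, hf] using congr($(h v f) v)
  have ha : a = c • 1 := ContinuousLinearMap.ext fun v ↦ congr($hc v)
  exact ha ▸ Submodule.smul_mem _ c (Subalgebra.one_mem _)

lemma eq_zero_or_eq_zero_of_rankOne_tmul_mem_center (hX : centerSubmodule F (X →L[F] X) ≠ ⊤)
    (h : rankOne (v ⊗ₜ[F] f) ∈ centerSubmodule F (X →L[F] X)) :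
    v = 0 ∨ f = 0 := by
  by_contra! hne
  obtain ⟨u, hu, hfu⟩ := exists_ne_zero_apply_eq_zero hX f
  obtain ⟨k, hk⟩ := SeparatingDual.exists_eq_one (R := F) hne.1
  obtain ⟨x, hx⟩ := DFunLike.ne_iff.mp hne.2
  have hzero := congr($(mem_centerSubmodule_iff_lie.mp h (rankOne (u ⊗ₜ[F] k))) x)
  exact hx (by simpa [lie_apply, hfu, hk, hu] using hzero)

lemma exists_sub_smul_rankOne_mem_center
    (h : ∀ (s : X) (k : StrongDual F X), ∃ p : X →L[F] X,
      ⁅a, rankOne (s ⊗ₜ[F] k)⁆ = ⁅rankOne (v ⊗ₜ[F] f), p⁆) :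
    ∃ l : F, a - l • rankOne (v ⊗ₜ[F] f) ∈ centerSubmodule F (X →L[F] X) := by
  by_cases hX : centerSubmodule F (X →L[F] X) = ⊤
  · exact ⟨0, hX ▸ Submodule.mem_top⟩
  have hentry {g k : StrongDual F X} {u : X} (s : X) (hg : g v = 0) (hu : f u = 0) :
      k u * g (a s) = k (a u) * g s := by
    obtain ⟨p, hp⟩ := h s k
    have := congr(g ($hp u))
    simpa [lie_apply, hg, hu, sub_eq_zero] using this
  obtain ⟨y, hy⟩ := exists_notMem_span_singleton hX v
  obtain ⟨g₀, hg₀v, hg₀y⟩ := exists_dual_eq_zero_eq_one hy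
  obtain ⟨u₀, hu₀, hfu₀⟩ := exists_ne_zero_apply_eq_zero hX f
  obtain ⟨k₀, hk₀⟩ := SeparatingDual.exists_eq_one (R := F) hu₀
  let c := g₀ (a y)
  have hker (u : X) (hu : f u = 0) : a u = c • u := by
    refine (SeparatingDual.eq_iff_forall_dual_eq (R := F)).mpr fun k ↦ ?_
    simpa [hg₀y, c, mul_comm] using (hentry (k := k) y hg₀v hu).symm
  have hrange (s : X) : a s - c • s ∈ Submodule.span F {v} := by
    by_contra hs
    obtain ⟨g, hgv, hg⟩ := exists_dual_eq_zero_eq_one hs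
    have := hentry (k := k₀) s hgv hfu₀
    rw [hker u₀ hfu₀, map_smul, hk₀, one_mul, smul_eq_mul, mul_one] at this
    simp [this] at hg
  obtain ⟨e, he⟩ := exists_forall_apply_sub_smul_eq_zero f
  obtain ⟨l, hl⟩ := Submodule.mem_span_singleton.mp (hrange e)
  refine ⟨l, ?_⟩
  have ha : a - l • rankOne (v ⊗ₜ[F] f) = c • 1 := by
    ext x
    have := hker _ (he x)
    rw [map_sub, map_smul] at this
    change a x - l • f x • v = c • x
    linear_combination (norm := module) this - f x • hl
  exact ha ▸ Submodule.smul_mem _ c (Subalgebra.one_mem _)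

lemma IsDualPair.exists_sub_smul_mem_center (hd : IsDualPair v w f g)
    (hvf : ⁅a, rankOne (v ⊗ₜ[F] f)⁆ = 0) (hvg : ⁅a, rankOne (v ⊗ₜ[F] g)⁆ = 0)
    (hwg : ⁅a, rankOne (w ⊗ₜ[F] g)⁆ = 0)
    (h : ∀ (s : X) (k : StrongDual F X), ∃ p p' : X →L[F] X,
      ⁅a, rankOne (s ⊗ₜ[F] k)⁆ = ⁅rankOne (v ⊗ₜ[F] f), p⁆ + ⁅rankOne (w ⊗ₜ[F] g), p'⁆) :
    ∃ c : F, a - c • (rankOne (v ⊗ₜ[F] f) + rankOne (w ⊗ₜ[F] g)) ∈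
      centerSubmodule F (X →L[F] X) := by
  obtain ⟨d, hav, haw, hfa, hga⟩ := hd.exists_apply_eq_smul_of_lie_eq_zero hvf hvg hwg
  obtain ⟨hfv, hfw, hgv, hgw⟩ := hd
  have hker (u : X) (hfu : f u = 0) (hgu : g u = 0) : ∃ c : F, a u = c • u := by
    rcases eq_or_ne u 0 with rfl | hu
    · exact ⟨0, by simp⟩
    obtain ⟨k, hk⟩ := SeparatingDual.exists_eq_one (R := F) hu
    obtain ⟨p, p', hp⟩ := h u k
    have hau : a u - k (a u) • u = f (p u) • v + g (p' u) • w := by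
      simpa [lie_apply, hk, hfu, hgu] using congr($hp u)
    have hf₀ : f (p u) = 0 := by simpa [hfa, hfu, hfv, hfw] using congr(f $hau).symm
    have hg₀ : g (p' u) = 0 := by simpa [hga, hgu, hgv, hgw] using congr(g $hau).symm
    exact ⟨k (a u), sub_eq_zero.mp (by simpa [hf₀, hg₀] using hau)⟩
  let P : X →L[F] X := rankOne (v ⊗ₜ[F] f) + rankOne (w ⊗ₜ[F] g)
  have hP (x : X) : P x = f x • v + g x • w := rfl
  have haP (x : X) : a (P x) = d • P x := by
    rw [hP, map_add, map_smul, map_smul, hav, haw]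
    module
  obtain ⟨c, hc⟩ := exists_eq_smul_of_forall_apply_eq_smul
    ((a * (1 - P) : X →L[F] X) : X →ₗ[F] X) ((1 - P : X →L[F] X) : X →ₗ[F] X) fun x ↦
      hker (x - P x) (by simp [hP, hfv, hfw]) (by simp [hP, hgv, hgw])
  have ha : a - (d - c) • P = c • 1 := by
    ext x
    have hx : a (x - P x) = c • (x - P x) := congr($hc x)
    rw [map_sub, haP] at hx
    change a x - (d - c) • P x = c • x
    linear_combination (norm := module) hx
  exact ⟨d - c, ha ▸ Submodule.smul_mem _ c (Subalgebra.one_mem _)⟩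

namespace IsReduced

variable [NeZero (2 : F)]
  {B : X ⊗[F] StrongDual F X →ₗ[F] X ⊗[F] StrongDual F X →ₗ[F] X →L[F] X}

lemma exists_polarization_sub_smul_mem_center (hB : IsReduced B) (hd : IsDualPair v w f g) :
    ∃ c : F, polarization B (v ⊗ₜ f) (w ⊗ₜ g)
      - c • (rankOne (v ⊗ₜ[F] f) + rankOne (w ⊗ₜ[F] g)) ∈ centerSubmodule F (X →L[F] X) := by
  refine hd.exists_sub_smul_mem_center (hB.lie_polarization_left v f _)
    (hB.lie_polarization_left_right v w f g) (hB.lie_polarization_right w g _) fun s k ↦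
    ⟨polarization B (w ⊗ₜ g) (s ⊗ₜ k), polarization B (s ⊗ₜ k) (v ⊗ₜ f), ?_⟩
  rw [← lie_skew (rankOne (v ⊗ₜ[F] f)), ← lie_skew (rankOne (w ⊗ₜ[F] g))]
  linear_combination (norm := module)
    lie_polarization_cyclic hB.lie_diag (v ⊗ₜ f) (w ⊗ₜ g) (s ⊗ₜ k)

lemma polarization_mem_center_of_apply_eq_zero (hB : IsReduced B) (hd : IsDualPair v w f g)
    (hfg : polarization B (v ⊗ₜ f) (w ⊗ₜ g) ∈ centerSubmodule F (X →L[F] X))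
    {h : StrongDual F X} (hv : h v = 0) (hw : h w = 0) :
    polarization B (v ⊗ₜ f) (w ⊗ₜ h) ∈ centerSubmodule F (X →L[F] X) := by
  have hd' : IsDualPair v w f (g + h) :=
    ⟨hd.left_left, hd.left_right, by simp [hd.right_left, hv], by simp [hd.right_right, hw]⟩
  -- Subtracting `hfg` leaves `w ⊗ h` in place of `w ⊗ (g + h)`; commuting with `v ⊗ h` kills `c`.
  obtain ⟨c, hc⟩ := hB.exists_polarization_sub_smul_mem_center hd'
  have hwh : polarization B (v ⊗ₜ f) (w ⊗ₜ h)
      - c • (rankOne (v ⊗ₜ[F] f) + rankOne (w ⊗ₜ[F] (g + h))) ∈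
        centerSubmodule F (X →L[F] X) := by
    convert sub_mem hc hfg using 1
    simp only [TensorProduct.tmul_add, map_add]
    abel
  have hlie := lie_eq_lie_of_sub_mem_center hwh (rankOne (v ⊗ₜ[F] h))
  rw [hB.lie_polarization_left_right] at hlie
  have hch (x : X) : c * h x = 0 := by
    simpa [lie_apply, hv, hw, hd.left_left, hd.left_right, hd.right_left] using
      congr(f ($hlie x)).symm
  rcases eq_or_ne c 0 with rfl | hc₀
  · simpa using hwh
  · have : h = 0 := ContinuousLinearMap.ext fun x ↦ (mul_eq_zero.mp (hch x)).resolve_left hc₀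
    simp [this]

lemma polarization_left_mem_center (hB : IsReduced B) (hd : IsDualPair v w f g)
    (hfg : polarization B (v ⊗ₜ f) (w ⊗ₜ g) ∈ centerSubmodule F (X →L[F] X))
    (k : StrongDual F X) :
    polarization B (v ⊗ₜ f) (w ⊗ₜ k) ∈ centerSubmodule F (X →L[F] X) := by
  let h := k - k v • f - k w • g
  have hv : h v = 0 := by simp [h, hd.left_left, hd.right_left]
  have hw : h w = 0 := by simp [h, hd.left_right, hd.right_right]
  have hk : k = k v • f + k w • g + h := by simp only [h]; abel
  rw [hk]
  simp only [TensorProduct.tmul_add, TensorProduct.tmul_smul, map_add, map_smul]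
  exact add_mem (add_mem (Submodule.smul_mem _ _ (hB.polarization_mem_center_of_right_eq v w f))
    (Submodule.smul_mem _ _ hfg)) (hB.polarization_mem_center_of_apply_eq_zero hd hfg hv hw)

lemma polarization_mem_center (hB : IsReduced B) (hd : IsDualPair v w f g)
    (hfg : polarization B (v ⊗ₜ f) (w ⊗ₜ g) ∈ centerSubmodule F (X →L[F] X))
    (k l : StrongDual F X) :
    polarization B (v ⊗ₜ k) (w ⊗ₜ l) ∈ centerSubmodule F (X →L[F] X) := by
  have hright (k' : StrongDual F X) :
      polarization B (v ⊗ₜ k') (w ⊗ₜ g) ∈ centerSubmodule F (X →L[F] X) := by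
    rw [polarization_comm] at hfg ⊢
    exact hB.polarization_left_mem_center hd.swap hfg k'
  have hleft := hB.polarization_left_mem_center hd hfg l
  have hanti : polarization B (v ⊗ₜ g) (w ⊗ₜ l) ∈ centerSubmodule F (X →L[F] X) := by
    have := sub_mem (sub_mem (hB.polarization_mem_center_of_right_eq v w (g + l))
      (hB.polarization_mem_center_of_right_eq v w g)) (add_mem
      (hB.polarization_mem_center_of_right_eq v w l) (hright l))
    convert this using 1
    simp only [TensorProduct.tmul_add, map_add, LinearMap.add_apply]
    abel
  let f' := f + (k - k v • f - k w • g)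
  have hd' : IsDualPair v w f' g :=
    ⟨by simp [f', hd.left_left, hd.right_left], by simp [f', hd.left_right, hd.right_right],
      hd.right_left, hd.right_right⟩
  have hf' := hB.polarization_left_mem_center hd' (hright f') l
  have hk : k = f' - f + k v • f + k w • g := by simp only [f']; abel
  rw [hk]
  simp only [TensorProduct.tmul_add, TensorProduct.tmul_sub, TensorProduct.tmul_smul, map_add,
    map_sub, map_smul, LinearMap.add_apply, LinearMap.sub_apply, LinearMap.smul_apply]
  exact add_mem (add_mem (sub_mem hf' hleft) (Submodule.smul_mem _ _ hleft))
    (Submodule.smul_mem _ _ hanti)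

variable (v w) in
lemma exists_forall_polarization_sub_smul_mem_center (hB : IsReduced B) :
    ∃ c : F, ∀ f g : StrongDual F X, polarization B (v ⊗ₜ f) (w ⊗ₜ g)
      - c • polarization jordanDefect (v ⊗ₜ f) (w ⊗ₜ g) ∈ centerSubmodule F (X →L[F] X) := by
  by_cases hvw : LinearIndependent F ![v, w]
  · obtain ⟨f, g, hd⟩ := exists_isDualPair hvw
    obtain ⟨c, hc⟩ := hB.exists_polarization_sub_smul_mem_center hd
    have hsub (a b : X ⊗[F] StrongDual F X) : polarization (B - (-c) • jordanDefect) a b =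
        polarization B a b - (-c) • polarization jordanDefect a b := by
      simp only [polarization_apply, LinearMap.sub_apply, LinearMap.smul_apply]
      module
    refine ⟨-c, fun k l ↦ ?_⟩
    rw [← hsub]
    refine (hB.sub_smul isReduced_jordanDefect (-c)).polarization_mem_center hd ?_ k l
    rwa [hsub, hd.polarization_jordanDefect, neg_smul_neg]
  · refine ⟨0, fun f g ↦ ?_⟩
    rw [zero_smul, sub_zero]
    rcases eq_or_ne v 0 with rfl | hv
    · simp
    obtain ⟨t, rfl⟩ : ∃ t : F, t • v = w := by
      simpa [LinearIndependent.pair_iff' hv] using hvw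
    rw [← TensorProduct.smul_tmul', map_smul]
    exact Submodule.smul_mem _ t (hB.polarization_mem_center_of_left_eq v f g)

lemma exists_polarization_sub_smul_jordanDefect_mem_center (hB : IsReduced B) :
    ∃ c : F, ∀ a b : X ⊗[F] StrongDual F X,
      polarization B a b - c • polarization jordanDefect a b ∈
        centerSubmodule F (X →L[F] X) := by
  let π := (centerSubmodule F (X →L[F] X)).mkQ
  obtain ⟨c, hc⟩ := exists_eq_smul_of_forall_tmul_tmul_eq_smul ((polarization B).compr₂ π)
    ((polarization jordanDefect).compr₂ π) fun v w ↦ by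
      obtain ⟨c, hc⟩ := hB.exists_forall_polarization_sub_smul_mem_center v w
      exact ⟨c, fun f g ↦ (Submodule.Quotient.eq _).mpr (hc f g)⟩
  exact ⟨c, fun a b ↦ (Submodule.Quotient.eq _).mp congr($hc a b)⟩

end IsReduced

variable [NeZero (2 : F)] {q : (X →L[F] X) →ₗ[F] (X →L[F] X) →ₗ[F] (X →L[F] X)}

lemma exists_dual_isReduced (hq : ∀ x, ⁅q x x, x⁆ = 0)
    (hX : centerSubmodule F (X →L[F] X) ≠ ⊤) :
    ∃ l : Module.Dual F (X ⊗[F] StrongDual F X),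
      IsReduced (q.compl₁₂ rankOne rankOne - l.smulRight rankOne) := by
  let π := (centerSubmodule F (X →L[F] X)).mkQ
  have hpure (v : X) (f : StrongDual F X) : ∃ c : F,
      q (rankOne (v ⊗ₜ f)) (rankOne (v ⊗ₜ f)) - c • rankOne (v ⊗ₜ f) ∈
        centerSubmodule F (X →L[F] X) := by
    refine exists_sub_smul_rankOne_mem_center fun s k ↦
      ⟨polarization q (rankOne (v ⊗ₜ f)) (rankOne (s ⊗ₜ k)), ?_⟩
    rw [← lie_skew (rankOne (v ⊗ₜ[F] f))]
    exact eq_neg_of_add_eq_zero_left (lie_diag_add_lie_polarization (i := .id) hq _ _)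
  obtain ⟨l, hl⟩ := exists_dual_forall_diag_tmul_eq_smul
    ((q.compl₁₂ rankOne rankOne).compr₂ π) (π ∘ₗ rankOne)
    (fun v f hvf ↦ eq_zero_or_eq_zero_of_rankOne_tmul_mem_center hX
      ((Submodule.Quotient.mk_eq_zero _).mp hvf))
    fun v f ↦ (hpure v f).imp fun c hc ↦ (Submodule.Quotient.eq _).mpr hc
  exact ⟨l, fun a ↦ by simp [sub_lie, smul_lie, hq],
    fun v f ↦ (Submodule.Quotient.eq _).mp (hl v f)⟩

lemma exists_polarization_sub_smul_mul_mem_center (hq : ∀ x, ⁅q x x, x⁆ = 0)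
    (hX : centerSubmodule F (X →L[F] X) ≠ ⊤) :
    ∃ (c : F) (l : Module.Dual F (X ⊗[F] StrongDual F X)), ∀ a b,
      polarization (q - c • LinearMap.mul F (X →L[F] X)) (rankOne a) (rankOne b)
        - (l a • rankOne b + l b • rankOne a) ∈ centerSubmodule F (X →L[F] X) := by
  obtain ⟨l, hl⟩ := exists_dual_isReduced hq hX
  obtain ⟨c, hc⟩ := hl.exists_polarization_sub_smul_jordanDefect_mem_center
  refine ⟨c, l - c • trace, fun a b ↦ ?_⟩
  convert hc a b using 1
  simp only [polarization_apply, jordanDefect_apply, LinearMap.sub_apply, LinearMap.smul_apply,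
    LinearMap.compl₁₂_apply, LinearMap.smulRight_apply, LinearMap.mul_apply', smul_eq_mul]
  module

lemma exists_dual_polarization_rankOne_sub_mem_center (hq : ∀ x, ⁅q x x, x⁆ = 0)
    {l : Module.Dual F (X ⊗[F] StrongDual F X)}
    (hl : ∀ a b, polarization q (rankOne a) (rankOne b) - (l a • rankOne b + l b • rankOne a) ∈
      centerSubmodule F (X →L[F] X)) :
    ∃ m : Module.Dual F (X →L[F] X), ∀ x a,
      polarization q x (rankOne a) - (l a • x + m x • rankOne a) ∈
        centerSubmodule F (X →L[F] X) := by
  let π := (centerSubmodule F (X →L[F] X)).mkQ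
  let S : (X →L[F] X) →ₗ[F] X ⊗[F] StrongDual F X →ₗ[F] X →L[F] X :=
    (polarization q).compl₁₂ .id rankOne - (l.smulRight .id).flip
  have hS (x : X →L[F] X) (a : X ⊗[F] StrongDual F X) :
      S x a = polarization q x (rankOne a) - l a • x := rfl
  have hswap (x : X →L[F] X) (a b : X ⊗[F] StrongDual F X) :
      ⁅S x a, rankOne b⁆ = ⁅rankOne a, S x b⁆ := by
    have hcyc := lie_polarization_cyclic (i := .id) hq x (rankOne a) (rankOne b)
    simp only [LinearMap.id_apply] at hcyc
    rw [lie_eq_lie_of_sub_mem_center (hl a b), polarization_comm q (rankOne b) x] at hcyc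
    rw [← lie_skew (rankOne a), hS, hS]
    simp only [sub_lie, add_lie, smul_lie] at hcyc ⊢
    rw [← lie_skew x (rankOne b), ← lie_skew x (rankOne a)]
    linear_combination (norm := module) hcyc
  have hpure (x : X →L[F] X) : ∃ c : F, π ∘ₗ S x = c • (π ∘ₗ rankOne) :=
    exists_eq_smul_of_forall_tmul_eq_smul _ _ fun v f ↦
      (exists_sub_smul_rankOne_mem_center fun s k ↦ ⟨_, hswap x _ _⟩).imp
        fun c hc ↦ (Submodule.Quotient.eq _).mpr hc
  obtain ⟨m, hm⟩ := exists_dual_forall_eq_smul (S.compr₂ π) (π ∘ₗ rankOne) hpure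
  refine ⟨m, fun x a ↦ ?_⟩
  rw [← sub_sub]
  exact (Submodule.Quotient.eq _).mp congr($(hm x) a)

lemma diag_sub_smul_mem_center (hq : ∀ x, ⁅q x x, x⁆ = 0)
    {l : Module.Dual F (X ⊗[F] StrongDual F X)} {m : Module.Dual F (X →L[F] X)}
    (hlm : ∀ x a, polarization q x (rankOne a) - (l a • x + m x • rankOne a) ∈
      centerSubmodule F (X →L[F] X)) (x : X →L[F] X) :
    q x x - m x • x ∈ centerSubmodule F (X →L[F] X) := by
  refine mem_center_of_forall_lie_rankOne_eq_zero fun v f ↦ ?_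
  have hdiag := lie_diag_add_lie_polarization (i := .id) hq x (rankOne (v ⊗ₜ f))
  simp only [LinearMap.id_apply] at hdiag
  rw [lie_eq_lie_of_sub_mem_center (hlm x _), add_lie, smul_lie, smul_lie, lie_self,
    ← lie_skew (rankOne _) x] at hdiag
  rw [sub_lie, smul_lie]
  linear_combination (norm := module) hdiag

lemma exists_diag_sub_sub_mem_center (hq : ∀ x, ⁅q x x, x⁆ = 0)
    (hX : centerSubmodule F (X →L[F] X) ≠ ⊤) :
    ∃ (c : F) (m : Module.Dual F (X →L[F] X)), ∀ x,
      q x x - c • x ^ 2 - m x • x ∈ centerSubmodule F (X →L[F] X) := by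
  obtain ⟨c, l, hl⟩ := exists_polarization_sub_smul_mul_mem_center hq hX
  have hq' (x : X →L[F] X) : ⁅(q - c • LinearMap.mul F (X →L[F] X)) x x, x⁆ = 0 := by
    have hsq : ⁅x * x, x⁆ = 0 := by rw [Ring.lie_def, mul_assoc, sub_self]
    simp [sub_lie, smul_lie, hq, hsq]
  obtain ⟨m, hm⟩ := exists_dual_polarization_rankOne_sub_mem_center hq' hl
  exact ⟨c, m, fun x ↦ by simpa [sq] using diag_sub_smul_mem_center hq' hm x⟩

end Operators

end CommutingTrace

open CommutingTrace in
theorem stmt11_general (F X : Type*) [Field F] [TopologicalSpace F] [IsTopologicalRing F]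
    [NeZero (2 : F)] [AddCommGroup X] [TopologicalSpace X] [IsTopologicalAddGroup X] [Module F X]
    [ContinuousSMul F X] [SeparatingDual F X]
    (q : (X →L[F] X) →ₗ[F] (X →L[F] X) →ₗ[F] (X →L[F] X))
    (hcomm : ∀ x : X →L[F] X, q x x * x = x * q x x) :
    ∃ z ∈ Subring.center (X →L[F] X),
      ∃ μ : (X →L[F] X) →ₗ[F] (X →L[F] X),
        (∀ x, μ x ∈ Subring.center (X →L[F] X)) ∧
        ∃ p : (X →L[F] X) →ₗ[F] (X →L[F] X) →ₗ[F] (X →L[F] X),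
          (∀ x y, p x y ∈ Subring.center (X →L[F] X)) ∧
          ∀ x : X →L[F] X, q x x = z * x ^ 2 + μ x * x + p x x := by
  obtain ⟨c, m, hcm⟩ : ∃ (c : F) (m : Module.Dual F (X →L[F] X)), ∀ x,
      q x x - c • x ^ 2 - m x • x ∈ centerSubmodule F (X →L[F] X) := by
    by_cases hX : centerSubmodule F (X →L[F] X) = ⊤
    · exact ⟨0, 0, fun x ↦ hX ▸ Submodule.mem_top⟩
    · exact exists_diag_sub_sub_mem_center (fun x ↦ sub_eq_zero.mpr (hcomm x)) hX
  obtain ⟨p, hp, hpdiag⟩ := exists_bilinear_mem_of_diag_mem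
    (q - c • LinearMap.mul F (X →L[F] X) - m.smulRight .id) (centerSubmodule F (X →L[F] X))
    fun x ↦ by simpa [sq] using hcm x
  have hscalar (t : F) : t • (1 : X →L[F] X) ∈ centerSubmodule F (X →L[F] X) :=
    Submodule.smul_mem _ t (Subalgebra.one_mem _)
  refine ⟨c • 1, hscalar c, m.smulRight 1, fun x ↦ hscalar (m x), p, hp, fun x ↦ ?_⟩
  simp [hpdiag, sq]

/-- **Corollary 3.21.**  Let `X` be a Banach space over the real or complex field
`F` and let `B(X)` be the algebra of all bounded linear operators on `X`.  Then
every commuting trace of an arbitrary `F`-bilinear map on `B(X)` is proper. -/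
theorem stmt11 (F X : Type*) [RCLike F] [NormedAddCommGroup X] [NormedSpace F X]
    [CompleteSpace X]
    (q : (X →L[F] X) →ₗ[F] (X →L[F] X) →ₗ[F] (X →L[F] X))
    (hcomm : ∀ x : X →L[F] X, q x x * x = x * q x x) :
    ∃ z ∈ Subring.center (X →L[F] X),
      ∃ μ : (X →L[F] X) →ₗ[F] (X →L[F] X),
        (∀ x, μ x ∈ Subring.center (X →L[F] X)) ∧
        ∃ p : (X →L[F] X) →ₗ[F] (X →L[F] X) →ₗ[F] (X →L[F] X),
          (∀ x y, p x y ∈ Subring.center (X →L[F] X)) ∧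
          ∀ x : X →L[F] X, q x x = z * x ^ 2 + μ x * x + p x x := by
  exact stmt11_general F X q hcomm
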